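/- Let F be the CDF of a Borel probability measure on ℝ, fix m ≥ 1 and τ_i = (2i−1)/(2m), let a_i = inf{x : F(x) ≥ τ_i}, b_i = sup{x : F(x) ≤ τ_i}, Λ = {θ ∈ ℝᵐ : θ_i ∈ [a_i, b_i] for all i}, L(θ) = ∑_{i=1}^m ∫_{a_i}^{θ_i} (F(s) − τ_i) ds, and let H : ℝᵐ ⇒ ℝᵐ be H(θ) = {h : h_i ∈ τ_i − [F(θ_i⁻), F(θ_i)] for all i}. Let z : [0,∞) → ℝᵐ be a solution of the differential inclusion ∂_t z_t ∈ H(z_t), i.e. there is a locally integrable g : [0,∞) → ℝᵐ with z_t = z_0 + ∫_0^t g_u du for all t ≥ 0 and g_u ∈ H(z_u) for almost every u ≥ 0. Then L is a Lyapunov function for this inclusion and Λ: for all 0 ≤ s < t, if z_s ∉ Λ then L(z_t) < L(z_s), and L(θ) = 0 for all θ ∈ Λ. -/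

import Mathlib

open MeasureTheory Filter

/-- No increase above the level `c`. -/
lemma aux_noincrease (y w : ℝ → ℝ) (c : ℝ)
    (hw : ∀ t : ℝ, 0 ≤ t → IntervalIntegrable w volume 0 t)
    (hy : ∀ t : ℝ, 0 ≤ t → y t = y 0 + ∫ u in (0 : ℝ)..t, w u)
    (hneg : ∀ᵐ u : ℝ, 0 ≤ u → c < y u → w u ≤ 0)
    (s t : ℝ) (hs : 0 ≤ s) (hst : s ≤ t) : y t ≤ max (y s) c := by
  by_contra! hlt
  have hcont : ContinuousOn y (Set.Icc s t) := by
    have h1 : ContinuousOn (fun r => y 0 + ∫ u in (0 : ℝ)..r, w u) (Set.Icc s t) := by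
      refine continuousOn_const.add ?_
      have h2 := intervalIntegral.continuousOn_primitive_interval' (μ := volume) (a := 0)
        (hw t (hs.trans hst)) (by simp)
      refine h2.mono ?_
      rw [Set.uIcc_of_le (hs.trans hst)]
      exact Set.Icc_subset_Icc hs le_rfl
    exact h1.congr (fun r hr => hy r (hs.trans hr.1))
  set M := max (y s) c with hM
  have hcl : IsClosed (Set.Icc s t ∩ y ⁻¹' Set.Iic M) :=
    hcont.preimage_isClosed_of_isClosed isClosed_Icc isClosed_Iic
  have hcpt : IsCompact (Set.Icc s t ∩ y ⁻¹' Set.Iic M) :=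
    isCompact_Icc.of_isClosed_subset hcl Set.inter_subset_left
  obtain ⟨r, ⟨hr1, hr2⟩, hr3⟩ := hcpt.exists_isGreatest
    ⟨s, ⟨le_rfl, hst⟩, (le_max_left _ _ : y s ≤ M)⟩
  have hr2' : y r ≤ M := hr2
  have h0r : 0 ≤ r := hs.trans hr1.1
  have hdiff : y t - y r = ∫ u in r..t, w u := by
    rw [hy t (hs.trans hst), hy r h0r,
      ← intervalIntegral.integral_interval_sub_left (hw t (hs.trans hst)) (hw r h0r)]
    ring
  have hle : ∫ u in r..t, w u ≤ 0 := by
    rw [intervalIntegral.integral_of_le hr1.2]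
    refine integral_nonpos_of_ae ?_
    filter_upwards [ae_restrict_of_ae hneg, ae_restrict_mem measurableSet_Ioc] with u hu hu2
    refine hu (h0r.trans hu2.1.le) ?_
    by_contra! hc
    have := hr3 ⟨⟨hr1.1.trans hu2.1.le, hu2.2⟩, (hc.trans (le_max_right _ _) : y u ≤ M)⟩
    exact absurd hu2.1 (not_lt.2 this)
  linarith

/-- Strict decrease above the level `c`. -/
lemma aux_strict (y w : ℝ → ℝ) (c : ℝ)
    (hw : ∀ t : ℝ, 0 ≤ t → IntervalIntegrable w volume 0 t)
    (hy : ∀ t : ℝ, 0 ≤ t → y t = y 0 + ∫ u in (0 : ℝ)..t, w u)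
    (hneg : ∀ᵐ u : ℝ, 0 ≤ u → c < y u → w u < 0)
    (s t : ℝ) (hs : 0 ≤ s) (hst : s < t) (hc : c < y s) : y t < y s := by
  have hneg' : ∀ᵐ u : ℝ, 0 ≤ u → c < y u → w u ≤ 0 := by
    filter_upwards [hneg] with u hu h1 h2 using (hu h1 h2).le
  by_contra! hge
  have hcon : ∀ u ∈ Set.Icc s t, c < y u := by
    intro u hu
    have := aux_noincrease y w c hw hy hneg' u t (hs.trans hu.1) hu.2
    rcases le_max_iff.1 this with h | h <;> linarith
  have h0t := hs.trans hst.le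
  have hdiff : y t - y s = ∫ u in s..t, w u := by
    rw [hy t h0t, hy s hs,
      ← intervalIntegral.integral_interval_sub_left (hw t h0t) (hw s hs)]
    ring
  have hint : IntervalIntegrable w volume s t := (hw s hs).symm.trans (hw t h0t)
  have hlt : ∫ u in s..t, w u < ∫ u in s..t, (0 : ℝ) := by
    have hae : ∀ᵐ u ∂(volume.restrict (Set.Ioc s t)), w u < 0 := by
      filter_upwards [ae_restrict_of_ae hneg, ae_restrict_mem measurableSet_Ioc] with u hu hu2
      exact hu (hs.trans hu2.1.le) (hcon u ⟨hu2.1.le, hu2.2⟩)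
    refine intervalIntegral.integral_lt_integral_of_ae_le_of_measure_setOf_lt_ne_zero hst.le hint
      intervalIntegrable_const ?_ ?_
    · filter_upwards [hae] with u hu using hu.le
    · intro h0
      have h1 : ∀ᵐ u ∂(volume.restrict (Set.Ioc s t)), ¬ (w u < 0) := by
        rw [ae_iff]; simpa using h0
      have h2 : ∀ᵐ u ∂(volume.restrict (Set.Ioc s t)), False := by
        filter_upwards [hae, h1] with u a b using b a
      rw [eventually_false_iff_eq_bot, ae_eq_bot, Measure.restrict_eq_zero, Real.volume_Ioc,
        ENNReal.ofReal_eq_zero] at h2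
      linarith
  simp at hlt
  linarith

/-- The scalar statement. -/
lemma aux_scalar (F : ℝ → ℝ) (hmono : Monotone F) (τ a b : ℝ) (hab : a ≤ b)
    (h1 : ∀ x, x < a → F x < τ) (h2 : ∀ x, a ≤ x → τ ≤ F x)
    (h3 : ∀ x, x < b → F x ≤ τ) (h4 : ∀ x, b < x → τ < F x)
    (y w : ℝ → ℝ)
    (hw : ∀ t : ℝ, 0 ≤ t → IntervalIntegrable w volume 0 t)
    (hy : ∀ t : ℝ, 0 ≤ t → y t = y 0 + ∫ u in (0 : ℝ)..t, w u)
    (hH : ∀ᵐ u : ℝ, 0 ≤ u → ∃ p ∈ Set.Icc (Function.leftLim F (y u)) (F (y u)), w u = τ - p)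
    (s t : ℝ) (hs : 0 ≤ s) (hst : s < t) :
    (∫ r in a..(y t), (F r - τ)) ≤ (∫ r in a..(y s), (F r - τ)) ∧
    (y s ∉ Set.Icc a b → (∫ r in a..(y t), (F r - τ)) < (∫ r in a..(y s), (F r - τ))) := by
  have hI : ∀ p q : ℝ, IntervalIntegrable (fun r => F r - τ) volume p q := fun p q =>
    hmono.intervalIntegrable.sub intervalIntegrable_const
  have hnw : ∀ t : ℝ, 0 ≤ t → IntervalIntegrable (fun u => - w u) volume 0 t :=
    fun t ht => (hw t ht).neg
  have hny : ∀ t : ℝ, 0 ≤ t → - y t = - y 0 + ∫ u in (0 : ℝ)..t, - w u := by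
    intro t ht
    rw [intervalIntegral.integral_neg, hy t ht]; ring
  have ea : ∀ᵐ u : ℝ, 0 ≤ u → a < y u → w u ≤ 0 := by
    filter_upwards [hH] with u hu h0 hlt
    obtain ⟨p, hp, he⟩ := hu h0
    have := (h2 a le_rfl).trans (hmono.le_leftLim hlt)
    linarith [hp.1]
  have eb : ∀ᵐ u : ℝ, 0 ≤ u → b < y u → w u < 0 := by
    filter_upwards [hH] with u hu h0 hlt
    obtain ⟨p, hp, he⟩ := hu h0
    obtain ⟨v, hv1, hv2⟩ := exists_between hlt
    have := (h4 v hv1).trans_le (hmono.le_leftLim hv2)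
    linarith [hp.1]
  have ec : ∀ᵐ u : ℝ, 0 ≤ u → -b < - y u → - w u ≤ 0 := by
    filter_upwards [hH] with u hu h0 hlt
    obtain ⟨p, hp, he⟩ := hu h0
    have := h3 (y u) (by linarith)
    linarith [hp.2]
  have ed : ∀ᵐ u : ℝ, 0 ≤ u → -a < - y u → - w u < 0 := by
    filter_upwards [hH] with u hu h0 hlt
    obtain ⟨p, hp, he⟩ := hu h0
    have := h1 (y u) (by linarith)
    linarith [hp.2]
  have ka := aux_noincrease y w a hw hy ea s t hs hst.le
  have kc := aux_noincrease (fun u => - y u) (fun u => - w u) (-b) hnw hny ec s t hs hst.le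
  have kb := aux_strict y w b hw hy eb s t hs hst
  have kd := aux_strict (fun u => - y u) (fun u => - w u) (-a) hnw hny ed s t hs hst
  simp only [neg_lt_neg_iff] at kd
  have hsub : (∫ r in a..(y s), (F r - τ)) - (∫ r in a..(y t), (F r - τ))
      = ∫ r in (y t)..(y s), (F r - τ) :=
    intervalIntegral.integral_interval_sub_left (hI _ _) (hI _ _)
  rcases lt_or_ge (y s) a with hA | hA
  · have hlt := kd hA
    have hta : y t ≤ a := by rcases le_max_iff.1 ka with h | h <;> linarith
    have : 0 < ∫ r in (y s)..(y t), -(F r - τ) := by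
      refine intervalIntegral.intervalIntegral_pos_of_pos_on (hI _ _).neg ?_ hlt
      intro x hx
      have := h1 x (hx.2.trans_le hta)
      linarith
    rw [intervalIntegral.integral_neg, ← intervalIntegral.integral_symm, ← hsub] at this
    exact ⟨by linarith, fun _ => by linarith⟩
  rcases lt_or_ge b (y s) with hB | hB
  · have hlt := kb hB
    have htb : b ≤ y t := by rcases le_max_iff.1 kc with h | h <;> linarith
    have : 0 < ∫ r in (y t)..(y s), (F r - τ) := by
      refine intervalIntegral.intervalIntegral_pos_of_pos_on (hI _ _) ?_ hlt
      intro x hx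
      have := h4 x (htb.trans_lt hx.1)
      linarith
    exact ⟨by linarith, fun _ => by linarith⟩
  · have e1 : y t ≤ y s := by rcases le_max_iff.1 ka with h | h <;> linarith
    have e2 : y s ≤ y t := by rcases le_max_iff.1 kc with h | h <;> linarith
    rw [le_antisymm e1 e2]
    exact ⟨le_rfl, fun h => absurd ⟨hA, hB⟩ h⟩

/-- Quantile facts. -/
lemma aux_quantile (μ : Measure ℝ) [IsProbabilityMeasure μ]
    (F : ℝ → ℝ) (hF : F = fun x => (μ (Set.Iic x)).toReal) (τ a b : ℝ)
    (h0 : 0 < τ) (h1 : τ < 1)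
    (ha : a = sInf {x : ℝ | τ ≤ F x}) (hb : b = sSup {x : ℝ | F x ≤ τ}) :
    Monotone F ∧ a ≤ b ∧ (∀ x, x < a → F x < τ) ∧ (∀ x, a ≤ x → τ ≤ F x) ∧
    (∀ x, x < b → F x ≤ τ) ∧ (∀ x, b < x → τ < F x) := by
  have hF' : F = ProbabilityTheory.cdf μ := by
    ext x; rw [hF, ProbabilityTheory.cdf_eq_real]; rfl
  have hmono : Monotone F := hF' ▸ ProbabilityTheory.monotone_cdf μ
  have hbot : Tendsto F atBot (nhds 0) := hF' ▸ ProbabilityTheory.tendsto_cdf_atBot μ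
  have htop : Tendsto F atTop (nhds 1) := hF' ▸ ProbabilityTheory.tendsto_cdf_atTop μ
  have hrc : ∀ x, ContinuousWithinAt F (Set.Ici x) x := by
    intro x; rw [hF']; exact (ProbabilityTheory.cdf μ).right_continuous x
  obtain ⟨l, hl⟩ := (hbot.eventually (gt_mem_nhds h0)).exists
  obtain ⟨u, hu⟩ := (htop.eventually (lt_mem_nhds h1)).exists
  have bddA : BddBelow {x : ℝ | τ ≤ F x} := ⟨l, fun x hx => by
    by_contra! h
    have := hmono h.le
    have hx' : τ ≤ F x := hx
    linarith⟩
  have bddB : BddAbove {x : ℝ | F x ≤ τ} := ⟨u, fun x hx => by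
    by_contra! h
    have := hmono h.le
    have hx' : F x ≤ τ := hx
    linarith⟩
  have neA : {x : ℝ | τ ≤ F x}.Nonempty := ⟨u, hu.le⟩
  have neB : {x : ℝ | F x ≤ τ}.Nonempty := ⟨l, hl.le⟩
  have p1 : ∀ x, x < a → F x < τ := by
    intro x hx
    by_contra! h
    have := csInf_le bddA h
    linarith
  have p2' : ∀ x, a < x → τ ≤ F x := by
    intro x hx
    rw [ha] at hx
    obtain ⟨v, hv, hvx⟩ := exists_lt_of_csInf_lt neA hx
    exact le_trans hv (hmono hvx.le)
  have p2a : τ ≤ F a := by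
    have : Tendsto F (nhdsWithin a (Set.Ioi a)) (nhds (F a)) :=
      (hrc a).mono Set.Ioi_subset_Ici_self
    refine ge_of_tendsto this ?_
    filter_upwards [self_mem_nhdsWithin] with x hx using p2' x hx
  have p4 : ∀ x, b < x → τ < F x := by
    intro x hx
    by_contra! h
    have := le_csSup bddB h
    linarith
  refine ⟨hmono, ?_, p1, fun x hx => p2a.trans (hmono hx), ?_, p4⟩
  · by_contra! h
    obtain ⟨v, hv1, hv2⟩ := exists_between h
    have := p1 v hv2
    have := p4 v hv1
    linarith
  · intro x hx
    rw [hb] at hx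
    obtain ⟨v, hv, hvx⟩ := exists_lt_of_lt_csSup neB hx
    exact le_trans (hmono hvx.le) hv

/-- `L(θ) = ∑ i, ∫_{a_i}^{θ_i} (F(s) − τ_i) ds` is a Lyapunov function for the
differential inclusion `∂_t z_t ∈ H(z_t)` (with `H(θ) = {h : h_i ∈ τ_i − [F(θ_i⁻), F(θ_i)]}`)
and the quantile set `Λ`: along any solution `z`, `L` strictly decreases as long as `z`
is outside `Λ`, and `L` vanishes on `Λ`. -/
theorem lyapunov_function_for_quantile_inclusion
    (μ : Measure ℝ) [IsProbabilityMeasure μ]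
    (F : ℝ → ℝ) (hF : F = fun x => (μ (Set.Iic x)).toReal)
    (m : ℕ) (hm : 1 ≤ m)
    (τ a b : Fin m → ℝ)
    (hτ : ∀ i : Fin m, τ i = (2 * (i : ℝ) + 1) / (2 * m))
    (ha : ∀ i : Fin m, a i = sInf {x : ℝ | τ i ≤ F x})
    (hb : ∀ i : Fin m, b i = sSup {x : ℝ | F x ≤ τ i})
    (Λ : Set (Fin m → ℝ))
    (hΛ : Λ = {θ | ∀ i : Fin m, θ i ∈ Set.Icc (a i) (b i)})
    (L : (Fin m → ℝ) → ℝ)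
    (hL : L = fun θ => ∑ i : Fin m, ∫ s in (a i)..(θ i), (F s - τ i))
    (H : (Fin m → ℝ) → Set (Fin m → ℝ))
    (hH : ∀ θ : Fin m → ℝ, H θ =
      {h | ∀ i : Fin m,
        ∃ p ∈ Set.Icc (Function.leftLim F (θ i)) (F (θ i)), h i = τ i - p})
    (z g : ℝ → (Fin m → ℝ))
    (hg_int : ∀ t : ℝ, 0 ≤ t → IntervalIntegrable g volume 0 t)
    (hz : ∀ t : ℝ, 0 ≤ t → z t = z 0 + ∫ u in (0 : ℝ)..t, g u)
    (hgH : ∀ᵐ u ∂(volume.restrict (Set.Ici (0 : ℝ))), g u ∈ H (z u)) :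
    (∀ s t : ℝ, 0 ≤ s → s < t → z s ∉ Λ → L (z t) < L (z s)) ∧
    (∀ θ ∈ Λ, L θ = 0) := by
  have hq : ∀ i : Fin m, _ := fun i => aux_quantile μ F hF (τ i) (a i) (b i)
    (by rw [hτ]; positivity)
    (by
      have hi : (i : ℝ) + 1 ≤ m := by exact_mod_cast i.2
      rw [hτ, div_lt_one (by linarith [(Nat.cast_nonneg (i : ℕ) : (0 : ℝ) ≤ (i : ℕ))])]
      linarith)
    (ha i) (hb i)
  constructor
  · intro s t hs hst hzs
    have key : ∀ i : Fin m, _ := fun i =>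
      aux_scalar F (hq i).1 (τ i) (a i) (b i) (hq i).2.1 (hq i).2.2.1 (hq i).2.2.2.1
        (hq i).2.2.2.2.1 (hq i).2.2.2.2.2 (fun u => z u i) (fun u => g u i)
        (fun t ht => by
          have h := hg_int t ht
          exact ⟨h.1.eval i, h.2.eval i⟩)
        (fun t ht => by
          have h := hg_int t ht
          have h2 := congrFun (hz t ht) i
          rw [h2, Pi.add_apply, intervalIntegral.integral_of_le ht,
            intervalIntegral.integral_of_le ht,
            eval_integral (fun j => h.1.eval j)])
        (by
          have h := (ae_restrict_iff' measurableSet_Ici).1 hgH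
          filter_upwards [h] with u hu h0
          have h3 := hu h0
          rw [hH] at h3
          exact h3 i) s t hs hst
    rw [hΛ] at hzs
    simp only [Set.mem_setOf_eq, not_forall] at hzs
    obtain ⟨i, hi⟩ := hzs
    rw [hL]
    exact Finset.sum_lt_sum (fun j _ => (key j).1) ⟨i, Finset.mem_univ i, (key i).2 hi⟩
  · intro θ hθ
    rw [hΛ] at hθ
    rw [hL]
    refine Finset.sum_eq_zero fun i _ => ?_
    obtain ⟨-, -, -, h2, h3, -⟩ := hq i
    have hi := hθ i
    rw [intervalIntegral.integral_of_le hi.1, integral_Ioc_eq_integral_Ioo]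
    refine setIntegral_eq_zero_of_forall_eq_zero fun x hx => ?_
    have := h2 x hx.1.le
    have := h3 x (hx.2.trans_le hi.2)
    linarith
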